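/- The function p(y) = -2(y³ - 3)/(y(y³ + 6)) satisfies the Painlevé-II equation with parameter m = -2, i.e. p''(y) - 2 p(y)³ - (2/3) y p(y) + (2/3)(-2) = 0 for all y ∈ ℝ with y ≠ 0 and y³ + 6 ≠ 0. -/

import Mathlib

/-!
The Bäcklund transformation of Painlevé-II lowers the parameter by one. If `p` solves the equation
with parameter `m`, then `σ = p' + p² + y/3` satisfies `σ' = 2pσ + c` with `c = (1 - 2m)/3`.
For `q = -p - c/σ` the roles are exchanged, `σ = -q' + q² + y/3`, and differentiating this relation
gives the equation for `q` with parameter `m - 1`. Starting from `p = 0` at `m = 0`, one step gives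
`-1/y` and a second step gives `1/y - 3y²/(y³ + 6) = -2(y³ - 3)/(y(y³ + 6))`.
-/

open Set Topology

section Backlund

variable {𝕜 : Type*} [NontriviallyNormedField 𝕜] {m : 𝕜} {p q : 𝕜 → 𝕜} {s : Set 𝕜} {y : 𝕜}

/-- `p` is a solution on `s` of the Painlevé-II equation `p'' - 2p³ - (2/3)yp + (2/3)m = 0`.
Both differentiability requirements are part of the notion, since `deriv` alone would return the
junk value `0` where they fail. -/
def IsPainleveIISolutionOn (m : 𝕜) (p : 𝕜 → 𝕜) (s : Set 𝕜) : Prop :=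
  ∀ y ∈ s, DifferentiableAt 𝕜 p y ∧
    HasDerivAt (deriv p) (2 * p y ^ 3 + 2 / 3 * y * p y - 2 / 3 * m) y

/-- The function `σ = p' + p² + y/3`, the denominator in the Bäcklund transformation of
Painlevé-II. -/
noncomputable def backlundDenom (p : 𝕜 → 𝕜) (y : 𝕜) : 𝕜 :=
  deriv p y + p y ^ 2 + y / 3

/-- The Bäcklund transform `-p - c/σ`, `c = (1 - 2m)/3`, of a solution `p` of Painlevé-II with
parameter `m`. It is meaningful only where `backlundDenom p` does not vanish. -/
noncomputable def backlundTransform (m : 𝕜) (p : 𝕜 → 𝕜) (y : 𝕜) : 𝕜 :=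
  -p y - (1 - 2 * m) / 3 / backlundDenom p y

theorem isPainleveIISolutionOn_zero (s : Set 𝕜) :
    IsPainleveIISolutionOn (0 : 𝕜) (fun _ => 0) s := by
  intro y _
  refine ⟨differentiableAt_const 0, ?_⟩
  simpa using hasDerivAt_const y (0 : 𝕜)

theorem backlundTransform_mul_backlundDenom (m : 𝕜) (hσ : backlundDenom p y ≠ 0) :
    backlundTransform m p y * backlundDenom p y = -p y * backlundDenom p y - (1 - 2 * m) / 3 := by
  rw [backlundTransform, sub_mul, div_mul_cancel₀ _ hσ]

namespace IsPainleveIISolutionOn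

theorem painleveII_equation (hp : IsPainleveIISolutionOn m p s) (hy : y ∈ s) :
    deriv (deriv p) y - 2 * p y ^ 3 - (2 / 3) * y * p y + (2 / 3) * m = 0 := by
  rw [(hp y hy).2.deriv]
  ring

theorem congr (hp : IsPainleveIISolutionOn m p s) (hs : IsOpen s) (hqp : EqOn q p s) :
    IsPainleveIISolutionOn m q s := by
  intro y hy
  have hev : q =ᶠ[𝓝 y] p := hqp.eventuallyEq_of_mem (hs.mem_nhds hy)
  rw [hqp hy]
  exact ⟨(hp y hy).1.congr_of_eventuallyEq hev, (hp y hy).2.congr_of_eventuallyEq hev.deriv⟩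

theorem hasDerivAt_backlundDenom (hp : IsPainleveIISolutionOn m p s) (hy : y ∈ s) :
    HasDerivAt (backlundDenom p) (2 * p y * backlundDenom p y + (1 - 2 * m) / 3) y := by
  obtain ⟨hp', hp''⟩ := hp y hy
  refine ((hp''.add (hp'.hasDerivAt.pow 2)).add ((hasDerivAt_id y).div_const 3)).congr_deriv ?_
  simp only [backlundDenom]
  push_cast
  ring

theorem hasDerivAt_backlundTransform (hp : IsPainleveIISolutionOn m p s) (hy : y ∈ s)
    (hσ : backlundDenom p y ≠ 0) :
    HasDerivAt (backlundTransform m p)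
      (backlundTransform m p y ^ 2 + y / 3 - backlundDenom p y) y := by
  have hquot := (hasDerivAt_const y ((1 - 2 * m) / 3)).fun_div (hp.hasDerivAt_backlundDenom hy) hσ
  refine ((hp y hy).1.hasDerivAt.fun_neg.sub hquot).congr_deriv ?_
  have hderiv : deriv p y = backlundDenom p y - p y ^ 2 - y / 3 := by
    simp only [backlundDenom]
    ring
  rw [hderiv, backlundTransform]
  field_simp
  ring

protected theorem backlundTransform (hp : IsPainleveIISolutionOn m p s) (hs : IsOpen s)
    (hσ : ∀ y ∈ s, backlundDenom p y ≠ 0) :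
    IsPainleveIISolutionOn (m - 1) (backlundTransform m p) s := by
  intro y hy
  have hq := hp.hasDerivAt_backlundTransform hy (hσ y hy)
  have hriccati : deriv (backlundTransform m p) =ᶠ[𝓝 y]
      fun t => backlundTransform m p t ^ 2 + t / 3 - backlundDenom p t := by
    filter_upwards [hs.mem_nhds hy] with t ht
    exact (hp.hasDerivAt_backlundTransform ht (hσ t ht)).deriv
  refine ⟨hq.differentiableAt, HasDerivAt.congr_of_eventuallyEq ?_ hriccati⟩
  refine (((hq.fun_pow 2).fun_add ((hasDerivAt_id' y).div_const 3)).fun_sub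
    (hp.hasDerivAt_backlundDenom hy)).congr_deriv ?_
  push_cast
  linear_combination -2 * backlundTransform_mul_backlundDenom m (hσ y hy)

end IsPainleveIISolutionOn

theorem backlundTransform_zero (h3 : (3 : 𝕜) ≠ 0) :
    backlundTransform (0 : 𝕜) (fun _ => 0) = fun y => -y⁻¹ := by
  funext y
  simp only [backlundTransform, backlundDenom, deriv_const]
  field_simp
  simp

theorem backlundDenom_neg_inv (h3 : (3 : 𝕜) ≠ 0) (hy : y ≠ 0) :
    backlundDenom (fun t : 𝕜 => -t⁻¹) y = (y ^ 3 + 6) / (3 * y ^ 2) := by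
  rw [backlundDenom, (hasDerivAt_inv hy).fun_neg.deriv]
  field_simp
  ring

theorem backlundTransform_neg_inv (h3 : (3 : 𝕜) ≠ 0) (hy : y ≠ 0) (hy6 : y ^ 3 + 6 ≠ 0) :
    backlundTransform (-1) (fun t : 𝕜 => -t⁻¹) y = -2 * (y ^ 3 - 3) / (y * (y ^ 3 + 6)) := by
  rw [backlundTransform, backlundDenom_neg_inv h3 hy]
  field_simp
  ring

theorem isPainleveIISolutionOn_neg_inv (h3 : (3 : 𝕜) ≠ 0) :
    IsPainleveIISolutionOn (-1 : 𝕜) (fun y => -y⁻¹) {0}ᶜ := by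
  rw [← backlundTransform_zero h3, ← zero_sub (1 : 𝕜)]
  refine (isPainleveIISolutionOn_zero _).backlundTransform isOpen_compl_singleton fun y hy => ?_
  simpa [backlundDenom, h3] using hy

theorem painleveII_rational_second_order_general (h3 : (3 : 𝕜) ≠ 0) :
    IsPainleveIISolutionOn (-2 : 𝕜) (fun t => -2 * (t ^ 3 - 3) / (t * (t ^ 3 + 6)))
      {y | y ≠ 0 ∧ y ^ 3 + 6 ≠ 0} := by
  have hs : IsOpen {y : 𝕜 | y ≠ 0 ∧ y ^ 3 + 6 ≠ 0} :=
    isOpen_ne.inter (isOpen_ne_fun (by fun_prop) continuous_const)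
  have hp : IsPainleveIISolutionOn (-1 : 𝕜) (fun y => -y⁻¹) {y | y ≠ 0 ∧ y ^ 3 + 6 ≠ 0} :=
    fun y hy => isPainleveIISolutionOn_neg_inv h3 y hy.1
  have hσ : ∀ y ∈ {y : 𝕜 | y ≠ 0 ∧ y ^ 3 + 6 ≠ 0}, backlundDenom (fun t => -t⁻¹) y ≠ 0 := by
    rintro y ⟨hy, hy6⟩
    rw [backlundDenom_neg_inv h3 hy]
    exact div_ne_zero hy6 (mul_ne_zero h3 (pow_ne_zero 2 hy))
  have hq := hp.backlundTransform hs hσ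
  have hm : (-1 - 1 : 𝕜) = -2 := by ring
  rw [hm] at hq
  exact hq.congr hs fun y hy => (backlundTransform_neg_inv h3 hy.1 hy.2).symm

end Backlund

/-- The function `p(y) = -2(y³-3)/(y(y³+6))` satisfies the Painlevé-II equation
with parameter `m = -2` for all `y` with `y ≠ 0` and `y³ + 6 ≠ 0`. -/
theorem painleveII_rational_second_order :
    ∀ y : ℝ, y ≠ 0 → y ^ 3 + 6 ≠ 0 →
      deriv (deriv (fun t : ℝ => -2 * (t ^ 3 - 3) / (t * (t ^ 3 + 6)))) y -
          2 * (-2 * (y ^ 3 - 3) / (y * (y ^ 3 + 6))) ^ 3 -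
          (2 / 3) * y * (-2 * (y ^ 3 - 3) / (y * (y ^ 3 + 6))) + (2 / 3) * (-2) = 0 := by
  intro y hy hy6
  exact (painleveII_rational_second_order_general three_ne_zero).painleveII_equation ⟨hy, hy6⟩
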